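/- Let s, m, c be positive integers with m + c ≤ s, and let q be a prime power. Let B be a random matrix distributed uniformly over the s×s matrices with entries in F_q. Let X and Y be fixed m×s matrices over F_q and Λ and Θ be fixed c×s matrices over F_q such that the (c+m)×s matrix obtained by vertically stacking Λ on top of Y has rank c+m, and the (c+m)×s matrix obtained by vertically stacking Θ on top of X has rank c+m. Then the conditional Shannon entropy in base q satisfies H_q(B·Xᵀ, Λ·B | Y·B, B·Θᵀ) ≥ ms + cs − (m+c)². -/

import Mathlib

open Finset Matrix

/-- `pr p X x` is the probability that the random variable `X` (on a finite sample
space with probability mass function `p`) takes the value `x`. -/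
noncomputable def pr {Ω α : Type*} [Fintype Ω] [DecidableEq α]
    (p : Ω → ℝ) (X : Ω → α) (x : α) : ℝ :=
  ∑ ω, if X ω = x then p ω else 0

/-- Shannon entropy in base `q` of the random variable `X`. -/
noncomputable def Hq {Ω α : Type*} [Fintype Ω] [Fintype α] [DecidableEq α]
    (q : ℕ) (p : Ω → ℝ) (X : Ω → α) : ℝ :=
  -∑ x : α, pr p X x * Real.logb q (pr p X x)

/-- Conditional Shannon entropy in base `q`: `H_q(X | Y) = H_q(X, Y) - H_q(Y)`. -/
noncomputable def condHq {Ω α β : Type*} [Fintype Ω] [Fintype α] [Fintype β]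
    [DecidableEq α] [DecidableEq β]
    (q : ℕ) (p : Ω → ℝ) (X : Ω → α) (Y : Ω → β) : ℝ :=
  Hq q p (fun ω => (X ω, Y ω)) - Hq q p Y

open Module in
/-- The entropy of a linear image of a uniform vector is the rank of the map. -/
theorem Hq_linear {K V W : Type*} [Field K] [Fintype K] [AddCommGroup V] [Module K V]
    [Fintype V] [AddCommGroup W] [Module K W] [Fintype W] [DecidableEq W]
    (L : V →ₗ[K] W) :
    Hq (Fintype.card K) (fun _ : V => (1 : ℝ) / Fintype.card V) L
      = (finrank K (LinearMap.range L) : ℝ) := by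
  classical
  have hq1 : (1 : ℝ) < Fintype.card K := by exact_mod_cast Fintype.one_lt_card
  have hq0 : (0 : ℝ) < Fintype.card K := by linarith
  have hV : (Fintype.card V : ℝ) = (Fintype.card K : ℝ) ^ finrank K V := by
    exact_mod_cast Module.card_eq_pow_finrank (K := K) (V := V)
  have hker : (Fintype.card (LinearMap.ker L) : ℝ)
      = (Fintype.card K : ℝ) ^ finrank K (LinearMap.ker L) := by
    exact_mod_cast Module.card_eq_pow_finrank (K := K) (V := LinearMap.ker L)
  have hran : (Fintype.card (LinearMap.range L) : ℝ)
      = (Fintype.card K : ℝ) ^ finrank K (LinearMap.range L) := by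
    exact_mod_cast Module.card_eq_pow_finrank (K := K) (V := LinearMap.range L)
  have hrn := LinearMap.finrank_range_add_finrank_ker L
  set r := finrank K (LinearMap.range L) with hr
  have hpr : ∀ x, pr (fun _ : V => (1 : ℝ) / Fintype.card V) L x
      = if x ∈ LinearMap.range L then ((Fintype.card K : ℝ) ^ r)⁻¹ else 0 := by
    intro x
    unfold pr
    rw [← Finset.sum_filter, Finset.sum_const, nsmul_eq_mul]
    split_ifs with hx
    · obtain ⟨v, rfl⟩ := hx
      have hcard : (Finset.univ.filter (fun w => L w = L v)).card
          = Fintype.card (LinearMap.ker L) := by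
        rw [← Fintype.card_subtype]
        refine Fintype.card_congr
          ⟨fun w => ⟨w.1 - v, by simp [w.2]⟩, fun k => ⟨k.1 + v, by simp⟩, ?_, ?_⟩
        · intro w; simp
        · intro w; simp
      rw [hcard, hker, hV, ← hrn, pow_add]
      field_simp
    · rw [Finset.filter_false_of_mem]
      · simp
      · intro w _ h
        exact hx ⟨w, h⟩
  unfold Hq
  simp only [hpr]
  have : ∀ x : W, (if x ∈ LinearMap.range L then ((Fintype.card K : ℝ) ^ r)⁻¹ else 0) *
      Real.logb (Fintype.card K)
        (if x ∈ LinearMap.range L then ((Fintype.card K : ℝ) ^ r)⁻¹ else 0)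
      = if x ∈ LinearMap.range L then ((Fintype.card K : ℝ) ^ r)⁻¹ * (-(r : ℝ)) else 0 := by
    intro x
    split_ifs
    · rw [Real.logb_inv, Real.logb_pow, Real.logb_self_eq_one hq1, mul_one]
    · simp
  simp only [this]
  rw [← Finset.sum_filter, Finset.sum_const, nsmul_eq_mul]
  have hc : ((Finset.univ.filter (fun x => x ∈ LinearMap.range L)).card : ℝ)
      = (Fintype.card K : ℝ) ^ r := by
    rw [← hran, ← Fintype.card_subtype]
  rw [hc]
  field_simp

open Module in
/-- Matrices killed by `P` on the left and by `Qᵀ` on the right. -/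
theorem finrank_kill_le {K : Type*} [Field K] {s : ℕ} {ι κ : Type*} [Fintype ι] [Fintype κ]
    [DecidableEq κ]
    (P : Matrix ι (Fin s) K) (Q : Matrix κ (Fin s) K)
    (S : Submodule K (Matrix (Fin s) (Fin s) K))
    (h1 : ∀ B ∈ S, P * B = 0) (h2 : ∀ B ∈ S, B * Qᵀ = 0) :
    finrank K S ≤ (s - Q.rank) * (s - P.rank) := by
  classical
  set U := LinearMap.ker P.mulVecLin
  set W := LinearMap.range (Qᵀ).mulVecLin
  have hU : finrank K U = s - P.rank := by
    have := LinearMap.finrank_range_add_finrank_ker P.mulVecLin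
    simp only [Module.finrank_fin_fun] at this
    change P.rank + finrank K U = s at this
    omega
  have hW : finrank K ((Fin s → K) ⧸ W) = s - Q.rank := by
    have := Submodule.finrank_quotient_add_finrank W
    simp only [Module.finrank_fin_fun] at this
    have h : finrank K W = Q.rank := Matrix.rank_transpose Q
    omega
  let Φ : (((Fin s → K) ⧸ W) →ₗ[K] U) →ₗ[K] Matrix (Fin s) (Fin s) K :=
    { toFun := fun f => LinearMap.toMatrix' (U.subtype ∘ₗ f ∘ₗ W.mkQ)
      map_add' := by
        intro f g
        rw [← map_add]
        congr 1
      map_smul' := by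
        intro a f
        rw [RingHom.id_apply, ← map_smul]
        congr 1 }
  have hle : S ≤ LinearMap.range Φ := by
    intro B hB
    have hBU : ∀ v, B.mulVecLin v ∈ U := by
      intro v
      simp [U, h1 B hB]
    have hBW : W ≤ LinearMap.ker (B.mulVecLin.codRestrict U hBU) := by
      rintro _ ⟨v, rfl⟩
      rw [LinearMap.mem_ker]
      ext1
      change B *ᵥ (Qᵀ *ᵥ v) = 0
      rw [Matrix.mulVec_mulVec, h2 B hB, Matrix.zero_mulVec]
    refine ⟨W.liftQ _ hBW, ?_⟩
    change LinearMap.toMatrix' (U.subtype ∘ₗ (W.liftQ _ hBW) ∘ₗ W.mkQ) = B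
    rw [Submodule.liftQ_mkQ, LinearMap.subtype_comp_codRestrict]
    exact LinearMap.toMatrix'_toLin' B
  calc finrank K S ≤ finrank K (LinearMap.range Φ) := Submodule.finrank_mono hle
    _ ≤ finrank K (((Fin s → K) ⧸ W) →ₗ[K] U) := LinearMap.finrank_range_le Φ
    _ = _ := by rw [Module.finrank_linearMap, hU, hW]

/-- Let `B` be a uniformly random `s × s` matrix over the finite field with `q`
elements.  Let `X, Y` be fixed `m × s` matrices and `Λ, Θ` fixed `c × s` matrices
such that the stackings `Λ ‖ Y` and `Θ ‖ X` both have rank `c + m`.  Then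
`H_q(B·Xᵀ, Λ·B | Y·B, B·Θᵀ) ≥ ms + cs − (m+c)²`. -/
theorem stmt5 (s m c q : ℕ) (hs : 0 < s) (hm : 0 < m) (hc : 0 < c)
    (hmc : m + c ≤ s)
    (K : Type) [Field K] [Fintype K] [DecidableEq K] (hq : Fintype.card K = q)
    (X Y : Matrix (Fin m) (Fin s) K) (Λ Θ : Matrix (Fin c) (Fin s) K)
    (hΛY : (Matrix.fromRows Λ Y).rank = c + m)
    (hΘX : (Matrix.fromRows Θ X).rank = c + m) :
    (m : ℝ) * s + (c : ℝ) * s - ((m : ℝ) + c) ^ 2 ≤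
      condHq q
        (fun _ : Matrix (Fin s) (Fin s) K =>
          (1 : ℝ) / Fintype.card (Matrix (Fin s) (Fin s) K))
        (fun B => (B * Xᵀ, Λ * B))
        (fun B => (Y * B, B * Θᵀ)) := by
  classical
  subst hq
  let L2 : Matrix (Fin s) (Fin s) K →ₗ[K] Matrix (Fin m) (Fin s) K × Matrix (Fin s) (Fin c) K :=
    { toFun := fun B => (Y * B, B * Θᵀ)
      map_add' := by intro A B; simp [Matrix.mul_add, Matrix.add_mul]
      map_smul' := by intro a B; simp }
  let L1 : Matrix (Fin s) (Fin s) K →ₗ[K]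
      (Matrix (Fin s) (Fin m) K × Matrix (Fin c) (Fin s) K) ×
      (Matrix (Fin m) (Fin s) K × Matrix (Fin s) (Fin c) K) :=
    { toFun := fun B => ((B * Xᵀ, Λ * B), (Y * B, B * Θᵀ))
      map_add' := by intro A B; simp [Matrix.mul_add, Matrix.add_mul]
      map_smul' := by intro a B; simp }
  have e1 := Hq_linear L1
  have e2 := Hq_linear L2
  have e : condHq (Fintype.card K)
        (fun _ : Matrix (Fin s) (Fin s) K =>
          (1 : ℝ) / Fintype.card (Matrix (Fin s) (Fin s) K))
        (fun B => (B * Xᵀ, Λ * B))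
        (fun B => (Y * B, B * Θᵀ)) = (Module.finrank K (LinearMap.range L1) : ℝ)
          - Module.finrank K (LinearMap.range L2) := by
    rw [← e1, ← e2]
    rfl
  rw [e]
  have b2 : Module.finrank K (LinearMap.range L2) ≤ m * s + s * c := by
    refine (Submodule.finrank_le _).trans ?_
    rw [Module.finrank_prod, Module.finrank_matrix, Module.finrank_matrix]
    simp
  have hk := finrank_kill_le (Matrix.fromRows Λ Y) (Matrix.fromRows Θ X) (LinearMap.ker L1)
    (by
      intro B hB
      have h : ((B * Xᵀ, Λ * B), (Y * B, B * Θᵀ)) = 0 := hB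
      simp only [Prod.mk_eq_zero] at h
      rw [Matrix.fromRows_mul, h.1.2, h.2.1]
      simp)
    (by
      intro B hB
      have h : ((B * Xᵀ, Λ * B), (Y * B, B * Θᵀ)) = 0 := hB
      simp only [Prod.mk_eq_zero] at h
      rw [Matrix.transpose_fromRows, Matrix.mul_fromCols, h.1.1, h.2.2]
      simp)
  rw [hΛY, hΘX] at hk
  have hrn := LinearMap.finrank_range_add_finrank_ker L1
  rw [Module.finrank_matrix] at hrn
  simp only [Fintype.card_fin, Module.finrank_self, mul_one] at hrn
  obtain ⟨d, rfl⟩ := Nat.exists_eq_add_of_le hmc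
  have hd : m + c + d - (c + m) = d := by omega
  rw [hd] at hk
  have hk' : (Module.finrank K (LinearMap.ker L1) : ℝ) ≤ d * d := by exact_mod_cast hk
  have b2' : (Module.finrank K (LinearMap.range L2) : ℝ)
      ≤ m * (m + c + d) + (m + c + d) * c := by exact_mod_cast b2
  have hrn' : (Module.finrank K (LinearMap.range L1) : ℝ) + Module.finrank K (LinearMap.ker L1)
      = (m + c + d) * (m + c + d) := by exact_mod_cast hrn
  push_cast
  nlinarith
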